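/- For all integers m, n ≥ 3, there is an injective group homomorphism from G(C_m) into G(C_n) if and only if m ≤ n. -/

import Mathlib

open SimpleGraph

/-- The set of commutator relations of a graph: one commutator for each edge. -/
def raagRels {V : Type} (G : SimpleGraph V) : Set (FreeGroup V) :=
  {r | ∃ u v : V, G.Adj u v ∧
    r = FreeGroup.of u * FreeGroup.of v * (FreeGroup.of u)⁻¹ * (FreeGroup.of v)⁻¹}

/-- The right-angled Artin group `A(G)` of a graph `G`. -/
abbrev RAAG {V : Type} (G : SimpleGraph V) : Type := PresentedGroup (raagRels G)

/-- `G(Γ) = A(Γᶜ)`, the RAAG on the complement graph. -/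
abbrev GG {V : Type} (G : SimpleGraph V) : Type := RAAG Gᶜ

/-- A linear forest: an acyclic graph all of whose vertices have degree at most 2. -/
def IsLinearForest {V : Type} (G : SimpleGraph V) : Prop :=
  G.IsAcyclic ∧ ∀ v : V, (G.neighborSet v).ncard ≤ 2

/-- The star of a vertex: the vertex together with its neighbours. -/
def starSet {V : Type} (G : SimpleGraph V) (v : V) : Set V :=
  insert v (G.neighborSet v)

/-- The double `D_v(G)` of `G` along the star of `v`: original vertices together with
copies of the vertices outside the star. -/
def GraphDouble {V : Type} (G : SimpleGraph V) (v : V) :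
    SimpleGraph (V ⊕ {w : V // w ∉ starSet G v}) :=
  SimpleGraph.fromRel (fun x y =>
    match x, y with
    | Sum.inl a, Sum.inl b => G.Adj a b
    | Sum.inr a, Sum.inr b => G.Adj a.1 b.1
    | Sum.inl a, Sum.inr b => a ∈ starSet G v ∧ G.Adj a b.1
    | Sum.inr _, Sum.inl _ => False)

/-- Subdivision of the edge `[v,w]` of `Λ`, with `none` as the new vertex. -/
def SubdivEdge {V : Type} (Λ : SimpleGraph V) (v w : V) : SimpleGraph (Option V) :=
  SimpleGraph.fromRel (fun x y =>
    match x, y with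
    | some a, some b => Λ.Adj a b ∧ ¬((a = v ∧ b = w) ∨ (a = w ∧ b = v))
    | some a, none => a = v ∨ a = w
    | none, some _ => False
    | none, none => False)

/-- The graph `Λ_u⁻(w₁,w₂)`, with `none` as the new vertex `v`. -/
def MinusGraph {V : Type} (Λ : SimpleGraph V) (u w₁ w₂ : V) : SimpleGraph (Option V) :=
  SimpleGraph.fromRel (fun x y =>
    match x, y with
    | some a, some b => Λ.Adj a b ∧
        ¬((a = u ∧ b = w₁) ∨ (a = w₁ ∧ b = u) ∨ (a = u ∧ b = w₂) ∨ (a = w₂ ∧ b = u))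
    | some a, none => a = w₁ ∨ a = u ∨ a = w₂
    | none, some _ => False
    | none, none => False)

/-- The graph `Λ_u⁺(w₁,w₂)`: `Λ_u⁻(w₁,w₂)` with the edge `[u,w₂]` added back. -/
def PlusGraph {V : Type} (Λ : SimpleGraph V) (u w₁ w₂ : V) : SimpleGraph (Option V) :=
  SimpleGraph.fromRel (fun x y =>
    (MinusGraph Λ u w₁ w₂).Adj x y ∨ (x = some u ∧ y = some w₂))

/-!
Let `φ : M → A(Γ)` be an injective homomorphism from a free abelian group. For a set `U` of
vertices, consider the submodule of `M` that dies when the vertices outside `U` are killed. Adding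
one vertex `v` to `U` lowers its rank by at most one, since the kernel of the retraction killing `v`
is free: `A(Γ)` embeds in `F ⋊ A(Γ)`, where `F` is free on the cosets of the subgroup generated by
the link of `v`. In whatever order the vertices are added, those at which the submodule drops form
a clique, which therefore has at least `rank M` elements.

For `G(C_n)` these cliques are independent sets of `C_n`, so `rank M ≤ n / 2`. This excludes
`n < m` for odd `n`, because `G(C_m)` contains `ℤ ^ ((n + 1) / 2)`. If `n = 2k`, the only
independent sets of size `k` are the even and the odd vertices, and comparing different orders shows
that no subgroup `ℤ ^ k` of `G(C_n)` meets the commutator subgroup; but for `n < m` the commutator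
of two adjacent vertices and `k - 1` further vertices span a `ℤ ^ k` in `G(C_m)`.

Conversely, let an edge `{b, c}` of a graph be contracted. Sending the merged vertex to `b c b⁻¹`
embeds the group of the contraction: let `b` swap two copies of it, `c` live on the second copy and
the other vertices on the first.
-/

namespace RAAG

section FreeGroup

variable {X : Type*}

theorem exists_finite_mem_closure_image_of (w : FreeGroup X) :
    ∃ S : Set X, S.Finite ∧ w ∈ Subgroup.closure (FreeGroup.of '' S) := by
  induction w using FreeGroup.induction_on with
  | C1 => exact ⟨∅, Set.finite_empty, Subgroup.one_mem _⟩
  | of x => exact ⟨{x}, Set.finite_singleton x, Subgroup.subset_closure ⟨x, rfl, rfl⟩⟩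
  | inv_of x ih => exact ih.imp fun S hS ↦ ⟨hS.1, Subgroup.inv_mem _ hS.2⟩
  | mul a b iha ihb =>
    obtain ⟨S, hS, ha⟩ := iha
    obtain ⟨T, hT, hb⟩ := ihb
    exact ⟨S ∪ T, hS.union hT, Subgroup.mul_mem _
      (Subgroup.closure_mono (Set.image_mono Set.subset_union_left) ha)
      (Subgroup.closure_mono (Set.image_mono Set.subset_union_right) hb)⟩

theorem exists_pow_mapsTo_compl {σ : Equiv.Perm X} (hσ : ∀ N > 0, ∀ x, (σ ^ N) x ≠ x) {S : Set X}
    (hS : S.Finite) : ∃ N : ℕ, Set.MapsTo (σ ^ N) S Sᶜ := by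
  by_contra! hno
  simp only [Set.MapsTo, Set.mem_compl_iff, not_forall, not_not] at hno
  choose x hx hσx using hno
  have := hS.to_subtype
  obtain ⟨i, j, hij, heq⟩ := Finite.exists_ne_map_eq_of_infinite
    fun N : ℕ ↦ ((⟨x N, hx N⟩, ⟨(σ ^ N) (x N), hσx N⟩) : S × S)
  wlog hlt : i < j generalizing i j
  · exact this j i hij.symm heq.symm (by omega)
  simp only [Prod.mk.injEq, Subtype.mk.injEq] at heq
  obtain ⟨hxij, hσij⟩ := heq
  refine hσ (j - i) (by omega) (x j) ((σ ^ i).injective ?_)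
  rw [← Equiv.Perm.mul_apply, ← pow_add, Nat.add_sub_cancel' hlt.le, ← hσij, hxij]

theorem isConj_map_pow {σ : Equiv.Perm X} {w : FreeGroup X} (h : IsConj (FreeGroup.map σ w) w)
    (N : ℕ) : IsConj (FreeGroup.map (σ ^ N : Equiv.Perm X) w) w := by
  induction N with
  | zero => rw [pow_zero, Equiv.Perm.coe_one, FreeGroup.map.id]
  | succ N ih =>
    have h' := (FreeGroup.map σ).map_isConj ih
    rw [FreeGroup.map.comp, ← Equiv.Perm.coe_mul, ← pow_succ'] at h'
    exact h'.trans h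

open Classical in
/-- The retraction of the free group on `X` onto the subgroup generated by the letters in `S`. -/
noncomputable def freeRetract (S : Set X) : FreeGroup X →* FreeGroup X :=
  FreeGroup.lift fun x ↦ if x ∈ S then FreeGroup.of x else 1

theorem freeRetract_of_mem_closure {S : Set X} {w : FreeGroup X}
    (hw : w ∈ Subgroup.closure (FreeGroup.of '' S)) : freeRetract S w = w := by
  refine MonoidHom.eqOn_closure (g := .id _) ?_ hw
  rintro _ ⟨x, hx, rfl⟩
  simp [freeRetract, hx]

theorem freeRetract_map_eq_one {S : Set X} {f : X → X} (hf : Set.MapsTo f S Sᶜ) {w : FreeGroup X}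
    (hw : w ∈ Subgroup.closure (FreeGroup.of '' S)) : freeRetract S (FreeGroup.map f w) = 1 := by
  refine MonoidHom.eqOn_closure (f := (freeRetract S).comp (FreeGroup.map f)) (g := 1) ?_ hw
  rintro _ ⟨x, hx, rfl⟩
  simp [freeRetract, show f x ∉ S from hf hx]

theorem exists_pow_apply_eq_self_of_isConj_map {σ : Equiv.Perm X} {w : FreeGroup X} (hw : w ≠ 1)
    (h : IsConj (FreeGroup.map σ w) w) : ∃ N > 0, ∃ x, (σ ^ N) x = x := by
  by_contra! hσ
  -- A power of `σ` moves the finitely many letters of `w` off themselves, so that retracting onto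
  -- them kills a conjugate of `w` but not `w` itself.
  obtain ⟨S, hS, hwS⟩ := exists_finite_mem_closure_image_of w
  obtain ⟨N, hN⟩ := exists_pow_mapsTo_compl hσ hS
  have hconj := (freeRetract S).map_isConj (isConj_map_pow h N)
  rw [freeRetract_map_eq_one hN hwS, freeRetract_of_mem_closure hwS] at hconj
  exact hw (isConj_one_right.1 hconj)

open Classical in
theorem eq_of_commute_of {i j : X} (h : Commute (FreeGroup.of i) (FreeGroup.of j)) : i = j := by
  by_contra hij
  have himage := h.map (FreeGroup.lift
    fun x ↦ if x = i then Equiv.swap (0 : Fin 3) 1 else Equiv.swap 1 2)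
  simp only [FreeGroup.lift_apply_of, if_true, if_neg (Ne.symm hij)] at himage
  exact absurd himage.eq (by decide)

theorem isCyclic_of_isFreeGroup_of_commute {G : Type*} [Group G] [IsFreeGroup G]
    (hG : ∀ a b : G, Commute a b) : IsCyclic G := by
  let b := IsFreeGroup.basis G
  have hgen : Subsingleton (IsFreeGroup.Generators G) := ⟨fun i j ↦ eq_of_commute_of <| by
    simpa only [b.repr_apply_coe] using (hG (b i) (b j)).map b.repr⟩
  have hcyc : IsCyclic (FreeGroup (IsFreeGroup.Generators G)) := by
    cases isEmpty_or_nonempty (IsFreeGroup.Generators G)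
    · infer_instance
    · have := Unique.mk' (h₁ := Classical.inhabited_of_nonempty ‹_›) (IsFreeGroup.Generators G)
      infer_instance
  exact isCyclic_of_surjective b.repr.symm b.repr.symm.surjective

theorem isCyclic_range_of_commGroup {A : Type*} [CommGroup A] (f : A →* FreeGroup X) :
    IsCyclic f.range :=
  isCyclic_of_isFreeGroup_of_commute <| by
    rintro ⟨_, a, rfl⟩ ⟨_, b, rfl⟩
    exact Subtype.ext ((Commute.all a b).map f)

theorem finrank_le_finrank_ker_add_one {M : Type*} [AddCommGroup M] [Module.Finite ℤ M]
    (f : M →+ Additive (FreeGroup X)) :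
    Module.finrank ℤ M ≤ Module.finrank ℤ (AddSubgroup.toIntSubmodule f.ker) + 1 := by
  set K := AddSubgroup.toIntSubmodule f.ker
  obtain ⟨⟨_, b, rfl⟩, hb⟩ := (isCyclic_range_of_commGroup f.toMultiplicativeLeft).exists_generator
  have hquot : Module.finrank ℤ (M ⧸ K) ≤ 1 := by
    refine finrank_le_one (K.mkQ b.toAdd) fun w ↦ ?_
    obtain ⟨a, rfl⟩ := K.mkQ_surjective w
    obtain ⟨j, hj⟩ := Subgroup.mem_zpowers_iff.1 (hb ⟨_, .ofAdd a, rfl⟩)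
    refine ⟨j, ?_⟩
    rw [← map_smul, ← sub_eq_zero, ← map_sub, Submodule.mkQ_apply, Submodule.Quotient.mk_eq_zero]
    refine (map_sub f _ _).trans (sub_eq_zero.2 ?_)
    exact (map_zsmul f j _).trans (congrArg Subtype.val hj)
  have hsum := K.finrank_quotient_add_finrank
  omega

end FreeGroup

section Generators

variable {V : Type} {Γ : SimpleGraph V} {G : Type*} [Group G]

/-- The generator of `A(Γ)` attached to a vertex. -/
def gen (Γ : SimpleGraph V) (v : V) : RAAG Γ := PresentedGroup.of v

theorem gen_commute {u v : V} (h : Γ.Adj u v) : Commute (gen Γ u) (gen Γ v) := by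
  have hrel : gen Γ u * gen Γ v * (gen Γ u)⁻¹ * (gen Γ v)⁻¹ = 1 :=
    PresentedGroup.one_of_mem ⟨u, v, h, rfl⟩
  rwa [← commutatorElement_def, commutatorElement_eq_one_iff_commute] at hrel

theorem gen_compl_commute {Λ : SimpleGraph V} {u v : V} (h : ¬Λ.Adj u v) :
    Commute (gen Λᶜ u) (gen Λᶜ v) := by
  rcases eq_or_ne u v with rfl | huv
  · exact Commute.refl _
  · exact gen_commute ((compl_adj Λ u v).2 ⟨huv, h⟩)

/-- The universal property of `A(Γ)`. -/
def lift (f : V → G) (hf : ∀ u v, Γ.Adj u v → Commute (f u) (f v)) : RAAG Γ →* G :=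
  PresentedGroup.toGroup (f := f) <| by
    rintro _ ⟨u, v, huv, rfl⟩
    simp [(hf u v huv).eq]

@[simp]
theorem lift_gen (f : V → G) (hf : ∀ u v, Γ.Adj u v → Commute (f u) (f v)) (v : V) :
    lift f hf (gen Γ v) = f v :=
  PresentedGroup.toGroup.of _

theorem hom_ext {f g : RAAG Γ →* G} (h : ∀ v, f (gen Γ v) = g (gen Γ v)) : f = g :=
  PresentedGroup.ext h

theorem closure_range_gen (Γ : SimpleGraph V) : Subgroup.closure (Set.range (gen Γ)) = ⊤ :=
  PresentedGroup.closure_range_of _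

end Generators

section Retract

variable {V : Type} {Γ : SimpleGraph V} {U W : Set V} {v : V}

open Classical in
/-- The retraction of `A(Γ)` onto the subgroup generated by the vertices in `U`, which kills all
other generators. -/
noncomputable def retract (Γ : SimpleGraph V) (U : Set V) : RAAG Γ →* RAAG Γ :=
  lift (fun v ↦ if v ∈ U then gen Γ v else 1) fun u v h ↦ by
    split_ifs <;> simp [gen_commute h]

theorem retract_gen_of_mem (h : v ∈ U) : retract Γ U (gen Γ v) = gen Γ v := by
  simp [retract, h]

theorem retract_gen_of_notMem (h : v ∉ U) : retract Γ U (gen Γ v) = 1 := by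
  simp [retract, h]

theorem retract_comp_retract (Γ : SimpleGraph V) (U W : Set V) :
    (retract Γ U).comp (retract Γ W) = retract Γ (U ∩ W) :=
  hom_ext fun v ↦ by by_cases hU : v ∈ U <;> by_cases hW : v ∈ W <;> simp [retract, hU, hW]

theorem retract_retract (U W : Set V) (g : RAAG Γ) :
    retract Γ U (retract Γ W g) = retract Γ (U ∩ W) g :=
  DFunLike.congr_fun (retract_comp_retract Γ U W) g

@[simp]
theorem retract_univ (Γ : SimpleGraph V) : retract Γ Set.univ = MonoidHom.id _ :=
  hom_ext fun v ↦ by simp [retract]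

@[simp]
theorem retract_empty (Γ : SimpleGraph V) : retract Γ ∅ = 1 :=
  hom_ext fun v ↦ by simp [retract]

theorem ker_retract_anti (Γ : SimpleGraph V) (h : U ⊆ W) :
    (retract Γ W).ker ≤ (retract Γ U).ker := fun g hg ↦ by
  rw [MonoidHom.mem_ker] at hg ⊢
  rw [← Set.inter_eq_left.2 h, ← retract_retract, hg, map_one]

theorem retract_compl_singleton_retract_insert (hv : v ∉ U) (g : RAAG Γ) :
    retract Γ {v}ᶜ (retract Γ (insert v U) g) = retract Γ U g := by
  rw [retract_retract, Set.inter_comm, ← Set.sdiff_eq, Set.insert_sdiff_self_of_notMem hv]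

theorem commute_retract_gen {u : V} (h : u ∈ U → v ∈ U → Commute (gen Γ u) (gen Γ v)) :
    Commute (retract Γ U (gen Γ u)) (retract Γ U (gen Γ v)) := by
  by_cases hu : u ∈ U <;> by_cases hv : v ∈ U <;>
    simp [retract_gen_of_mem, retract_gen_of_notMem, hu, hv, h]

theorem commutator_le_ker_retract (hU : Γ.IsClique U) :
    commutator (RAAG Γ) ≤ (retract Γ U).ker := by
  have hcomm : ∀ x ∈ Set.range (retract Γ U ∘ gen Γ), ∀ y ∈ Set.range (retract Γ U ∘ gen Γ),
      x * y = y * x := by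
    rintro _ ⟨u, rfl⟩ _ ⟨v, rfl⟩
    rcases eq_or_ne u v with rfl | huv
    · rfl
    · exact (commute_retract_gen fun hu hv ↦ gen_commute (hU hu hv huv)).eq
  have := Subgroup.isMulCommutative_closure hcomm
  rw [← Subgroup.map_eq_bot_iff, commutator_def, Subgroup.map_commutator, ← closure_range_gen,
    MonoidHom.map_closure, ← Set.range_comp, Subgroup.commutator_self_eq_bot_iff]
  exact this

end Retract

section VertexSplitting

variable {V : Type} {Γ : SimpleGraph V} {v : V}

/-- The automorphisms of a free group permuting the letters. -/
def freePermAut (X : Type*) : Equiv.Perm X →* MulAut (FreeGroup X) where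
  toFun := FreeGroup.freeGroupCongr
  map_one' := FreeGroup.freeGroupCongr_refl
  map_mul' σ τ := (FreeGroup.freeGroupCongr_trans τ σ).symm

/-- The subgroup of `A(Γ)` generated by the neighbours of `v`. -/
def linkSubgroup (Γ : SimpleGraph V) (v : V) : Subgroup (RAAG Γ) :=
  Subgroup.closure (gen Γ '' Γ.neighborSet v)

/-- The left cosets of the link of `v` in `A(Γ)`. -/
abbrev LinkCoset (Γ : SimpleGraph V) (v : V) : Type := RAAG Γ ⧸ linkSubgroup Γ v

/-- The free letter attached to the trivial coset of the link of `v`. -/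
def baseLetter (Γ : SimpleGraph V) (v : V) : FreeGroup (LinkCoset Γ v) :=
  .of ((1 : RAAG Γ) : LinkCoset Γ v)

theorem commute_gen_of_mem_linkSubgroup {p : RAAG Γ} (hp : p ∈ linkSubgroup Γ v) :
    Commute p (gen Γ v) := by
  have hle : linkSubgroup Γ v ≤ Subgroup.centralizer {gen Γ v} := by
    refine (Subgroup.closure_le _).2 ?_
    rintro _ ⟨u, hu, rfl⟩
    exact Subgroup.mem_centralizer_singleton_iff.2 (gen_commute hu.symm).eq
  exact Subgroup.mem_centralizer_singleton_iff.1 (hle hp)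

/-- The translation action of `A(Γ)` on the free group on the cosets of the link of `v`. -/
def cosetAction (Γ : SimpleGraph V) (v : V) : RAAG Γ →* MulAut (FreeGroup (LinkCoset Γ v)) :=
  (freePermAut _).comp (MulAction.toPermHom (RAAG Γ) (LinkCoset Γ v))

theorem cosetAction_apply (g : RAAG Γ) (w : FreeGroup (LinkCoset Γ v)) :
    cosetAction Γ v g w = FreeGroup.map (MulAction.toPerm g) w :=
  rfl

@[simp]
theorem cosetAction_of (g h : RAAG Γ) :
    cosetAction Γ v g (.of (h : LinkCoset Γ v)) = .of ↑(g * h : RAAG Γ) :=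
  FreeGroup.map.of

theorem commute_inr_gen_inl_baseLetter {u : V} (huv : Γ.Adj u v) :
    Commute (SemidirectProduct.inr (φ := cosetAction Γ v) (gen Γ u))
      (SemidirectProduct.inl (baseLetter Γ v)) := by
  have hfix : cosetAction Γ v (gen Γ u) (baseLetter Γ v) = baseLetter Γ v := by
    rw [baseLetter, cosetAction_of]
    refine congrArg FreeGroup.of (QuotientGroup.eq.2 ?_)
    have hmem : gen Γ u ∈ linkSubgroup Γ v := Subgroup.subset_closure ⟨u, huv.symm, rfl⟩
    simpa using (linkSubgroup Γ v).inv_mem hmem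
  ext <;> simp [hfix]

open Classical in
/-- The splitting of `A(Γ)` over the subgroup generated by the vertices other than `v`: the
generator `v` goes to the base letter. -/
noncomputable def split (Γ : SimpleGraph V) (v : V) :
    RAAG Γ →* FreeGroup (LinkCoset Γ v) ⋊[cosetAction Γ v] RAAG Γ :=
  lift (fun u ↦ if u = v then .inl (baseLetter Γ v)
    else .inr (gen Γ u)) fun a b hab ↦ by
      split_ifs with ha hb hb
      · exact Commute.refl _
      · exact (commute_inr_gen_inl_baseLetter (ha ▸ hab.symm)).symm
      · exact commute_inr_gen_inl_baseLetter (hb ▸ hab)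
      · exact (gen_commute hab).map _

theorem right_split (g : RAAG Γ) : (split Γ v g).right = retract Γ {v}ᶜ g := by
  have h : SemidirectProduct.rightHom.comp (split Γ v) = retract Γ {v}ᶜ := hom_ext fun u ↦ by
    by_cases hu : u = v <;> simp [split, retract, hu]
  exact DFunLike.congr_fun h g

/-- The conjugate `g v g⁻¹` only depends on the coset of `g` modulo the link of `v`. -/
def cosetConj (Γ : SimpleGraph V) (v : V) : LinkCoset Γ v → RAAG Γ :=
  Quotient.lift (fun g ↦ g * gen Γ v * g⁻¹) fun a b hab ↦ by
    have hcomm := commute_gen_of_mem_linkSubgroup (QuotientGroup.leftRel_apply.1 hab)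
    calc a * gen Γ v * a⁻¹ = a * (gen Γ v * (a⁻¹ * b)) * b⁻¹ := by group
      _ = a * ((a⁻¹ * b) * gen Γ v) * b⁻¹ := by rw [hcomm.eq]
      _ = b * gen Γ v * b⁻¹ := by group

theorem cosetConj_mk (g : RAAG Γ) : cosetConj Γ v g = g * gen Γ v * g⁻¹ :=
  rfl

/-- A left inverse of `split`. -/
def unsplit (Γ : SimpleGraph V) (v : V) :
    FreeGroup (LinkCoset Γ v) ⋊[cosetAction Γ v] RAAG Γ →* RAAG Γ :=
  SemidirectProduct.lift (FreeGroup.lift (cosetConj Γ v)) (MonoidHom.id _) fun g ↦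
    FreeGroup.ext_hom _ _ fun x ↦ by
      induction x using QuotientGroup.induction_on with
      | H h => simp [mul_assoc, cosetConj_mk]

theorem unsplit_split (g : RAAG Γ) : unsplit Γ v (split Γ v g) = g := by
  have h : (unsplit Γ v).comp (split Γ v) = MonoidHom.id _ := hom_ext fun u ↦ by
    by_cases hu : u = v <;> simp [split, unsplit, hu, baseLetter, cosetConj_mk]
  exact DFunLike.congr_fun h g

theorem split_injective (Γ : SimpleGraph V) (v : V) : Function.Injective (split Γ v) :=
  Function.LeftInverse.injective unsplit_split

theorem split_eq_inl {w : RAAG Γ} (hw : retract Γ {v}ᶜ w = 1) :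
    split Γ v w = .inl (split Γ v w).left := by
  ext <;> simp [right_split, hw]

/-- The kernel of the retraction killing `v` is free. -/
noncomputable def kerToFree (Γ : SimpleGraph V) (v : V) :
    (retract Γ {v}ᶜ).ker →* FreeGroup (LinkCoset Γ v) where
  toFun w := (split Γ v w).left
  map_one' := by simp
  map_mul' w w' := by simp [right_split, MonoidHom.mem_ker.1 w.2]

theorem kerToFree_injective (Γ : SimpleGraph V) (v : V) :
    Function.Injective (kerToFree Γ v) := fun w w' h ↦ by
  refine Subtype.ext (split_injective Γ v ?_)
  rw [split_eq_inl w.2, split_eq_inl w'.2]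
  exact congrArg SemidirectProduct.inl h

theorem eq_one_of_pow_eq_one_of_retract_eq_one {w : RAAG Γ} (hw : retract Γ {v}ᶜ w = 1)
    {N : ℕ} (hN : N ≠ 0) (h : w ^ N = 1) : w = 1 := by
  have hker : (⟨w, hw⟩ : (retract Γ {v}ᶜ).ker) ^ N = 1 := Subtype.ext h
  have hfree : kerToFree Γ v ⟨w, hw⟩ = 1 := (pow_eq_one_iff_left hN).1 <| by
    rw [← map_pow, hker, map_one]
  exact congrArg Subtype.val ((map_eq_one_iff _ (kerToFree_injective Γ v)).1 hfree)

theorem exists_conj_pow_mem_linkSubgroup {w g : RAAG Γ} (hw : retract Γ {v}ᶜ w = 1) (hw1 : w ≠ 1)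
    (hgw : Commute g w) :
    ∃ N > 0, ∃ h : RAAG Γ, h⁻¹ * retract Γ {v}ᶜ g ^ N * h ∈ linkSubgroup Γ v := by
  set g₀ := retract Γ {v}ᶜ g
  set w₀ := (split Γ v w).left
  have hw₀ : w₀ ≠ 1 := fun h ↦ hw1 <| split_injective Γ v <| by
    rw [split_eq_inl hw, map_one]
    exact congrArg SemidirectProduct.inl h
  have hconj : IsConj (FreeGroup.map (MulAction.toPerm g₀) w₀) w₀ := by
    have hleft := congrArg SemidirectProduct.left (hgw.map (split Γ v)).eq
    rw [SemidirectProduct.mul_left, SemidirectProduct.mul_left, right_split, right_split, hw,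
      map_one, MulAut.one_apply, cosetAction_apply] at hleft
    exact isConj_iff.2 ⟨_, mul_inv_eq_of_eq_mul hleft⟩
  obtain ⟨N, hN, x, hx⟩ := exists_pow_apply_eq_self_of_isConj_map hw₀ hconj
  induction x using QuotientGroup.induction_on with
  | H h =>
  refine ⟨N, hN, h, ?_⟩
  rw [← MulAction.toPermHom_apply, ← map_pow] at hx
  simpa [mul_assoc] using QuotientGroup.eq.1 hx.symm

end VertexSplitting

section Filtration

variable {V : Type} {Γ : SimpleGraph V} {M : Type*} [AddCommGroup M]
  (φ : M →+ Additive (RAAG Γ)) {U W : Set V} {v : V}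

/-- The part of the abelian group `M` that becomes trivial when all vertices outside `U` are
killed. As `U` grows from `∅` to all of `V`, these submodules decrease from `M` to `ker φ`. -/
noncomputable def retractKer (U : Set V) : Submodule ℤ M :=
  AddSubgroup.toIntSubmodule ((retract Γ U).toAdditive.comp φ).ker

variable {φ}

theorem mem_retractKer {b : M} : b ∈ retractKer φ U ↔ retract Γ U (φ b).toMul = 1 :=
  Iff.rfl

theorem retractKer_anti (h : U ⊆ W) : retractKer φ W ≤ retractKer φ U :=
  fun _ hb ↦ ker_retract_anti Γ h hb

theorem retractKer_empty (φ : M →+ Additive (RAAG Γ)) : retractKer φ ∅ = ⊤ := by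
  ext b
  simp [mem_retractKer]

theorem retractKer_univ (hφ : Function.Injective φ) : retractKer φ Set.univ = ⊥ := by
  ext b
  simp [mem_retractKer, map_eq_zero_iff φ hφ]

theorem finrank_retractKer_le [Module.Finite ℤ M] (hv : v ∉ U) :
    Module.finrank ℤ (retractKer φ U) ≤ Module.finrank ℤ (retractKer φ (insert v U)) + 1 := by
  let toKer : Multiplicative (retractKer φ U) →* (retract Γ {v}ᶜ).ker :=
    (((retract Γ (insert v U)).comp φ.toMultiplicativeLeft).comp
      (retractKer φ U).toAddSubgroup.subtype.toMultiplicative).codRestrict _ fun b ↦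
        (retract_compl_singleton_retract_insert hv _).trans b.toAdd.2
  let toFree : retractKer φ U →+ Additive (FreeGroup (LinkCoset Γ v)) :=
    ((kerToFree Γ v).comp toKer).toAdditiveRight
  have hker : AddSubgroup.toIntSubmodule toFree.ker =
      (retractKer φ (insert v U)).comap (retractKer φ U).subtype := by
    ext b
    exact (map_eq_one_iff _ (kerToFree_injective Γ v)).trans Subtype.ext_iff
  have hfinrank := finrank_le_finrank_ker_add_one toFree
  rwa [hker, (Submodule.comapSubtypeEquivOfLe
    (retractKer_anti (Set.subset_insert v U))).finrank_eq] at hfinrank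

variable (φ) in
/-- The vertex `v` is a jump over `U` if killing only the vertices outside `insert v U` preserves
more of `M` than killing those outside `U`. -/
def IsJump (U : Set V) (v : V) : Prop :=
  ¬retractKer φ U ≤ retractKer φ (insert v U)

theorem IsJump.notMem (h : IsJump φ U v) : v ∉ U :=
  fun hv ↦ h (by rw [Set.insert_eq_of_mem hv])

theorem retract_insert_of_mem_linkSubgroup {u : V} (huv : ¬Γ.Adj u v) {p : RAAG Γ}
    (hp : p ∈ linkSubgroup Γ v) : retract Γ (insert u U) p = retract Γ U p := by
  refine MonoidHom.eqOn_closure ?_ hp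
  rintro _ ⟨w, hw : Γ.Adj v w, rfl⟩
  have hwu : w ≠ u := by
    rintro rfl
    exact huv hw.symm
  by_cases hwU : w ∈ U <;> simp [retract, hwu, hwU]

theorem IsJump.adj {U' : Set V} {v' : V} (hv' : IsJump φ U' v') (hv : IsJump φ U v)
    (hU : insert v' U' ⊆ U) : Γ.Adj v' v := by
  by_contra hadj
  obtain ⟨a, ha, ha'⟩ := SetLike.not_le_iff_exists.1 hv'
  obtain ⟨b, hb, hb'⟩ := SetLike.not_le_iff_exists.1 hv
  rw [mem_retractKer] at ha ha' hb hb'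
  -- A conjugate of a power of the image of `a` over `U` lies in the subgroup generated by the link
  -- of `v`, where killing `v'` changes nothing; so this power dies already over `insert v' U'`.
  have hcomm : Commute (φ a).toMul (φ b).toMul := (Commute.all _ _).map φ.toMultiplicativeLeft
  obtain ⟨N, hN, h, hmem⟩ := exists_conj_pow_mem_linkSubgroup
    ((retract_compl_singleton_retract_insert hv.notMem _).trans hb) hb' (hcomm.map _)
  have hretract := retract_insert_of_mem_linkSubgroup (U := U') hadj hmem
  rw [retract_compl_singleton_retract_insert hv.notMem] at hretract
  simp only [map_mul, map_pow, map_inv, retract_retract, Set.inter_eq_left.2 hU,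
    Set.inter_eq_left.2 ((Set.subset_insert v' U').trans hU), ha, one_pow, mul_one,
    inv_mul_cancel] at hretract
  have hpow : retract Γ (insert v' U') (φ a).toMul ^ N = 1 := by
    rwa [mul_eq_one_iff_eq_inv, mul_eq_left] at hretract
  refine ha' (eq_one_of_pow_eq_one_of_retract_eq_one (v := v') ?_ hN.ne' hpow)
  exact (retract_compl_singleton_retract_insert hv'.notMem _).trans ha

variable (φ) in
/-- A clique of jumps between `U` and `W` that accounts for the loss of rank from `U` to `W`. -/
structure IsJumpClique (U W K : Set V) : Prop where
  isClique : Γ.IsClique K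
  isJump : ∀ v ∈ K, ∃ X, U ⊆ X ∧ insert v X ⊆ W ∧ IsJump φ X v
  finrank_le :
    Module.finrank ℤ (retractKer φ U) ≤ Module.finrank ℤ (retractKer φ W) + K.ncard

theorem IsJumpClique.exists_insert [Finite V] [Module.Finite ℤ M] {K : Set V}
    (hK : IsJumpClique φ U W K) (hUW : U ⊆ W) (hv : v ∉ W) :
    ∃ K', IsJumpClique φ U (insert v W) K' := by
  have hisJump : ∀ u ∈ K, ∃ X, U ⊆ X ∧ insert u X ⊆ insert v W ∧ IsJump φ X u := fun u hu ↦
    (hK.isJump u hu).imp fun X hX ↦ ⟨hX.1, hX.2.1.trans (Set.subset_insert v W), hX.2.2⟩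
  by_cases hvW : IsJump φ W v
  · have hvK : v ∉ K := fun h ↦ by
      obtain ⟨X, -, hX, -⟩ := hK.isJump v h
      exact hv (hX (Set.mem_insert v X))
    refine ⟨insert v K, hK.isClique.insert fun u hu _ ↦ ?_, ?_, ?_⟩
    · obtain ⟨X, -, hX, hu⟩ := hK.isJump u hu
      exact (hu.adj hvW hX).symm
    · rintro u (rfl | hu)
      · exact ⟨W, hUW, subset_rfl, hvW⟩
      · exact hisJump u hu
    · have hstep := finrank_retractKer_le (φ := φ) hv
      have hle := hK.finrank_le
      rw [Set.ncard_insert_of_notMem hvK]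
      omega
  · refine ⟨K, hK.isClique, hisJump, hK.finrank_le.trans ?_⟩
    rw [(not_not.1 hvW).antisymm (retractKer_anti (Set.subset_insert v W))]

theorem exists_isJumpClique [Finite V] [Module.Finite ℤ M] (φ : M →+ Additive (RAAG Γ))
    (hUW : U ⊆ W) : ∃ K, IsJumpClique φ U W K := by
  refine (Set.Finite.induction_to (C := fun T ↦ U ⊆ T ∧ ∃ K, IsJumpClique φ U T K) W.toFinite U
    hUW ⟨subset_rfl, ∅, by simp, by simp, by simp⟩ ?_).2
  rintro T hT ⟨hUT, K, hK⟩
  obtain ⟨v, hvW, hvT⟩ := Set.exists_of_ssubset hT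
  exact ⟨v, ⟨hvW, hvT⟩, hUT.trans (Set.subset_insert v T), hK.exists_insert hUT hvT⟩

theorem exists_isClique_union [Finite V] [Module.Finite ℤ M] (hφ : Function.Injective φ)
    (hUW : U ⊆ W) :
    ∃ K₁ ⊆ W \ U, ∃ K₂ ⊆ Wᶜ, Γ.IsClique (K₁ ∪ K₂) ∧
      Module.finrank ℤ (retractKer φ U) ≤ Module.finrank ℤ (retractKer φ W) + K₁.ncard ∧
      Module.finrank ℤ (retractKer φ W) ≤ K₂.ncard := by
  obtain ⟨K₁, hK₁⟩ := exists_isJumpClique φ hUW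
  obtain ⟨K₂, hK₂⟩ := exists_isJumpClique φ (Set.subset_univ W)
  refine ⟨K₁, fun v hv ↦ ?_, K₂, fun v hv ↦ ?_, ?_, hK₁.finrank_le, ?_⟩
  · obtain ⟨X, hUX, hXW, hX⟩ := hK₁.isJump v hv
    exact ⟨hXW (Set.mem_insert v X), fun hvU ↦ hX.notMem (hUX hvU)⟩
  · obtain ⟨X, hWX, -, hX⟩ := hK₂.isJump v hv
    exact fun hvW ↦ hX.notMem (hWX hvW)
  · have : Std.Symm Γ.Adj := ⟨fun _ _ ↦ Adj.symm⟩
    refine (Set.pairwise_union_of_symm).2 ⟨hK₁.isClique, hK₂.isClique, ?_⟩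
    intro u hu v hv _
    obtain ⟨X, -, hXW, hX⟩ := hK₁.isJump u hu
    obtain ⟨Y, hWY, -, hY⟩ := hK₂.isJump v hv
    exact hX.adj hY (hXW.trans hWY)
  · have hle := hK₂.finrank_le
    rwa [retractKer_univ hφ, finrank_bot, zero_add] at hle

theorem exists_isClique_finrank_le [Finite V] [Module.Finite ℤ M] (hφ : Function.Injective φ) :
    ∃ K : Set V, Γ.IsClique K ∧ Module.finrank ℤ M ≤ K.ncard := by
  obtain ⟨_, _, K, _, hK, _, hfinrank⟩ := exists_isClique_union hφ (Set.empty_subset ∅)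
  rw [retractKer_empty, finrank_top] at hfinrank
  exact ⟨K, hK.subset Set.subset_union_right, hfinrank⟩

end Filtration

section CycleIndependence

variable {n : ℕ}

theorem cycleGraph_adj_iff_val (hn : 1 < n) (u v : Fin n) :
    (cycleGraph n).Adj u v ↔ u.val + 1 = v.val ∨ v.val + 1 = u.val ∨
      (u.val = 0 ∧ v.val + 1 = n) ∨ (v.val = 0 ∧ u.val + 1 = n) := by
  have hsub : ∀ a b : Fin n, (a - b).val =
      if b.val ≤ a.val then a.val - b.val else n - b.val + a.val := fun a b ↦ by
    split_ifs with h
    · exact Fin.sub_val_of_le h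
    · rw [Fin.val_sub, Nat.mod_eq_of_lt (by omega)]
  rw [cycleGraph_adj', hsub, hsub]
  split_ifs <;> omega

theorem cycleGraph_adj_add_one [NeZero n] (hn : 1 < n) (i : Fin n) :
    (cycleGraph n).Adj i (i + 1) := by
  rw [cycleGraph_adj_iff_val hn, Fin.val_add, Fin.val_one', Nat.mod_eq_of_lt hn]
  rcases Nat.lt_or_ge (i.val + 1) n with h | h
  · simp [Nat.mod_eq_of_lt h]
  · simp [show i.val + 1 = n by omega]

variable {T : Set (Fin n)}

theorem add_one_notMem_of_isIndepSet [NeZero n] (hn : 1 < n)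
    (hT : (cycleGraph n).IsIndepSet T) {i : Fin n} (hi : i ∈ T) : i + 1 ∉ T := fun hi' ↦
  have hadj := cycleGraph_adj_add_one hn i
  hT hi hi' hadj.ne hadj

theorem ncard_union_image_add_one [NeZero n] (hn : 1 < n) (hT : (cycleGraph n).IsIndepSet T) :
    (T ∪ (· + 1) '' T).ncard = 2 * T.ncard := by
  have hdisj : Disjoint T ((· + 1) '' T) := by
    rw [Set.disjoint_right]
    rintro _ ⟨i, hi, rfl⟩
    exact add_one_notMem_of_isIndepSet hn hT hi
  rw [Set.ncard_union_eq hdisj, Set.ncard_image_of_injective _ (add_left_injective 1), two_mul]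

theorem two_mul_ncard_le_of_isIndepSet (hn : 1 < n) (hT : (cycleGraph n).IsIndepSet T) :
    2 * T.ncard ≤ n := by
  have : NeZero n := ⟨by omega⟩
  rw [← ncard_union_image_add_one hn hT]
  simpa using Set.ncard_le_card (T ∪ (· + 1) '' T)

theorem add_one_mem_iff_of_isIndepSet [NeZero n] (hn : 1 < n)
    (hT : (cycleGraph n).IsIndepSet T) (hcard : n ≤ 2 * T.ncard) (i : Fin n) :
    i + 1 ∈ T ↔ i ∉ T := by
  have huniv : T ∪ (· + 1) '' T = Set.univ := by
    refine Set.eq_of_subset_of_ncard_le (Set.subset_univ _) ?_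
    rw [ncard_union_image_add_one hn hT, Set.ncard_univ]
    simpa using hcard
  refine ⟨fun h hi ↦ add_one_notMem_of_isIndepSet hn hT hi h, fun hi ↦ ?_⟩
  have hmem : i + 1 ∈ T ∪ (· + 1) '' T := huniv ▸ Set.mem_univ _
  rwa [Set.mem_union, (add_left_injective 1).mem_set_image, or_iff_left hi] at hmem

variable (n) in
/-- The even vertices of the cycle; its complement consists of the odd ones. -/
def evenVertices : Set (Fin n) :=
  {i | Even i.val}

theorem eq_evenVertices_or_compl_of_isIndepSet (hn : 1 < n)
    (hT : (cycleGraph n).IsIndepSet T) (hcard : n ≤ 2 * T.ncard) :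
    T = evenVertices n ∨ T = (evenVertices n)ᶜ := by
  have : NeZero n := ⟨by omega⟩
  have hparity : ∀ k : ℕ, Fin.ofNat n k ∈ T ↔ (Even k ↔ 0 ∈ T) := by
    intro k
    induction k with
    | zero => simp
    | succ k ih =>
      have hsucc : Fin.ofNat n (k + 1) = Fin.ofNat n k + 1 := by ext; simp [Fin.val_add]
      rw [hsucc, add_one_mem_iff_of_isIndepSet hn hT hcard, ih, Nat.even_add_one]
      tauto
  have hmem : ∀ i, i ∈ T ↔ (i ∈ evenVertices n ↔ 0 ∈ T) := fun i ↦ by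
    simpa [evenVertices] using hparity i.val
  by_cases h0 : 0 ∈ T
  · exact .inl (Set.ext fun i ↦ by simp [hmem i, h0])
  · exact .inr (Set.ext fun i ↦ by simp [hmem i, h0])

theorem isIndepSet_evenVertices (hn : Even n) : (cycleGraph n).IsIndepSet (evenVertices n) := by
  obtain ⟨k, rfl⟩ := hn
  rintro u (hu : Even u.val) v (hv : Even v.val) - huv
  rw [cycleGraph_adj_iff_val (by grind)] at huv
  grind

theorem isIndepSet_compl_evenVertices (hn : Even n) :
    (cycleGraph n).IsIndepSet (evenVertices n)ᶜ := by
  obtain ⟨k, rfl⟩ := hn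
  rintro u (hu : ¬Even u.val) v (hv : ¬Even v.val) - huv
  rw [cycleGraph_adj_iff_val (by grind)] at huv
  grind

end CycleIndependence

section EvenCycle

variable {n k : ℕ} {M : Type*} [AddCommGroup M] [Module.Finite ℤ M]
  {φ : M →+ Additive (GG (cycleGraph n))} {U W : Set (Fin n)}

theorem exists_union_eq_evenVertices_or_compl (hφ : Function.Injective φ) (hn : 1 < n)
    (hUW : U ⊆ W) (hrank : n ≤ 2 * Module.finrank ℤ (retractKer φ U)) :
    ∃ K₁ ⊆ W \ U, ∃ K₂ ⊆ Wᶜ, (K₁ ∪ K₂ = evenVertices n ∨ K₁ ∪ K₂ = (evenVertices n)ᶜ) ∧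
      Module.finrank ℤ (retractKer φ U) ≤ Module.finrank ℤ (retractKer φ W) + K₁.ncard ∧
      Module.finrank ℤ (retractKer φ W) ≤ K₂.ncard := by
  obtain ⟨K₁, hK₁, K₂, hK₂, hK, hle₁, hle₂⟩ := exists_isClique_union hφ hUW
  have hdisj : Disjoint K₁ K₂ :=
    disjoint_compl_right.mono (hK₁.trans Set.sdiff_subset) hK₂
  refine ⟨K₁, hK₁, K₂, hK₂, ?_, hle₁, hle₂⟩
  refine eq_evenVertices_or_compl_of_isIndepSet hn ((isClique_compl _).1 hK) ?_
  rw [Set.ncard_union_eq hdisj]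
  omega

theorem le_two_mul_finrank_retractKer [Module.IsTorsionFree ℤ M] (hφ : Function.Injective φ)
    (hn : 1 < n) (hrank : n ≤ 2 * Module.finrank ℤ M)
    (hW : W = evenVertices n ∨ W = (evenVertices n)ᶜ) (hne : retractKer φ W ≠ ⊥) :
    n ≤ 2 * Module.finrank ℤ (retractKer φ W) := by
  obtain ⟨K₁, hK₁, K₂, hK₂, hK, hle₁, hle₂⟩ :=
    exists_union_eq_evenVertices_or_compl hφ hn (Set.empty_subset W)
      (by rwa [retractKer_empty, finrank_top])
  have hK : K₁ ∪ K₂ = W ∨ K₁ ∪ K₂ = Wᶜ := by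
    rcases hW with rfl | rfl
    · exact hK
    · rwa [compl_compl, or_comm]
  rcases hK with hK | hK
  · have hK₂_empty : K₂ = ∅ :=
      Set.subset_empty_iff.1 fun v hv ↦ hK₂ hv (hK ▸ .inr hv)
    rw [hK₂_empty, Set.ncard_empty, Nat.le_zero, Submodule.finrank_eq_zero] at hle₂
    exact absurd hle₂ hne
  · have hK₁_empty : K₁ = ∅ :=
      Set.subset_empty_iff.1 fun v hv ↦ (hK ▸ .inl hv : v ∈ Wᶜ) (hK₁ hv).1
    rw [hK₁_empty, Set.ncard_empty, retractKer_empty, finrank_top] at hle₁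
    omega

theorem eq_zero_of_mem_commutator [Module.IsTorsionFree ℤ M] (hφ : Function.Injective φ)
    (hn : 4 ≤ n) (hn' : Even n) (hrank : n ≤ 2 * Module.finrank ℤ M) {e : M}
    (he : (φ e).toMul ∈ commutator (GG (cycleGraph n))) : e = 0 := by
  by_contra hne
  have hbot : ∀ W : Set (Fin n), (cycleGraph n).IsIndepSet W → retractKer φ W ≠ ⊥ := fun W hW h ↦
    hne <| (Submodule.mem_bot ℤ).1 <| h ▸ commutator_le_ker_retract ((isClique_compl _).2 hW) he
  have heven := le_two_mul_finrank_retractKer hφ (by omega) hrank (.inl rfl)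
    (hbot _ (isIndepSet_evenVertices hn'))
  have hodd := le_two_mul_finrank_retractKer hφ (by omega) hrank (.inr rfl)
    (hbot _ (isIndepSet_compl_evenVertices hn'))
  -- The odd vertices lose no rank, so neither does `u`, and the jumps of an order beginning with
  -- `u` are the even vertices: all of the rank is lost after adding `u` and these. But the even
  -- vertices lose no rank either, and `u` costs at most one.
  let u : Fin n := ⟨1, by omega⟩
  have hu : u ∉ evenVertices n := by simp [u, evenVertices]
  have hsingle : n ≤ 2 * Module.finrank ℤ (retractKer φ {u}) :=
    hodd.trans <| Nat.mul_le_mul_left 2 <| Submodule.finrank_mono <|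
      retractKer_anti <| Set.singleton_subset_iff.2 hu
  obtain ⟨K₁, hK₁, K₂, hK₂, hK, -, hle₂⟩ := exists_union_eq_evenVertices_or_compl hφ (by omega)
    (Set.singleton_subset_iff.2 (Set.mem_insert u (evenVertices n))) hsingle
  have huK : u ∉ K₁ ∪ K₂ := by
    rintro (h | h)
    · exact (hK₁ h).2 rfl
    · exact hK₂ h (Set.mem_insert _ _)
  have hK : K₁ ∪ K₂ = evenVertices n := hK.resolve_right fun h ↦ huK (h ▸ hu)
  have hK₂_empty : K₂ = ∅ :=
    Set.subset_empty_iff.1 fun v hv ↦ hK₂ hv (.inr (hK ▸ .inr hv))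
  have hstep := finrank_retractKer_le (φ := φ) hu
  rw [hK₂_empty, Set.ncard_empty] at hle₂
  omega

theorem two_mul_finrank_le (hφ : Function.Injective φ) (hn : 1 < n) :
    2 * Module.finrank ℤ M ≤ n := by
  obtain ⟨K, hK, hle⟩ := exists_isClique_finrank_le hφ
  have hcard := two_mul_ncard_le_of_isIndepSet hn ((isClique_compl _).1 hK)
  omega

end EvenCycle

section FreeAbelian

variable {ι : Type*} [Fintype ι] {G : Type*} [Group G]

/-- The homomorphism `ℤ^ι → G` sending the standard basis to pairwise commuting elements. -/
def powHom (x : ι → G) (hx : Pairwise fun i j ↦ Commute (x i) (x j)) : (ι → ℤ) →+ Additive G :=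
  AddMonoidHom.noncommPiCoprod (fun i ↦ zmultiplesHom (Additive G) (.ofMul (x i)))
    fun _ _ hij a b ↦ (hx hij).zpow_zpow a b

theorem powHom_single [DecidableEq ι] (x : ι → G) (hx : Pairwise fun i j ↦ Commute (x i) (x j))
    (i : ι) (k : ℤ) : powHom x hx (Pi.single i k) = .ofMul (x i ^ k) :=
  (AddMonoidHom.noncommPiCoprod_single (N := fun _ : ι ↦ ℤ) _ i k).trans <| by simp

theorem powHom_injective [DecidableEq ι] {x : ι → G}
    (hx : Pairwise fun i j ↦ Commute (x i) (x j)) {i₀ : ι} (h₀ : ¬IsOfFinOrder (x i₀))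
    (χ : ι → G →* Multiplicative ℤ)
    (hχ : ∀ j ≠ i₀, ∀ i, χ j (x i) = .ofAdd ((Pi.single i 1 : ι → ℤ) j)) :
    Function.Injective (powHom x hx) := by
  have heval : ∀ j ≠ i₀, (MonoidHom.toAdditiveLeft (χ j)).comp (powHom x hx) =
      Pi.evalAddMonoidHom (fun _ ↦ ℤ) j := fun j hj ↦ by
    refine AddMonoidHom.functions_ext ℤ _ _ fun i k ↦ ?_
    rcases eq_or_ne j i with rfl | hij <;> simp [powHom_single, hχ j hj, *]
  rw [injective_iff_map_eq_zero]
  intro a ha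
  have hcoord : ∀ j ≠ i₀, a j = 0 := fun j hj ↦ by
    simpa [ha] using (DFunLike.congr_fun (heval j hj) a).symm
  have hsingle : a = Pi.single i₀ (a i₀) := by
    ext j
    rcases eq_or_ne j i₀ with rfl | hj
    · simp
    · simp [hj, hcoord j hj]
  rw [hsingle, powHom_single, ofMul_eq_zero] at ha
  have hzero : a i₀ = 0 :=
    injective_zpow_iff_not_isOfFinOrder.2 h₀ (ha.trans (zpow_zero _).symm)
  rw [hsingle, hzero, Pi.single_zero]

end FreeAbelian

section CliqueSubgroup

variable {V : Type} {Γ : SimpleGraph V}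

open Classical in
/-- The exponent sum of the generator `v`, as a character of `A(Γ)`. -/
noncomputable def expSum (Γ : SimpleGraph V) (v : V) : RAAG Γ →* Multiplicative ℤ :=
  lift (fun u ↦ .ofAdd ((Pi.single u 1 : V → ℤ) v)) fun _ _ _ ↦ Commute.all _ _

theorem expSum_gen [DecidableEq V] (u v : V) :
    expSum Γ v (gen Γ u) = .ofAdd ((Pi.single u 1 : V → ℤ) v) := by
  rw [expSum, lift_gen]
  congr!

theorem not_isOfFinOrder_gen (v : V) : ¬IsOfFinOrder (gen Γ v) := fun h ↦ by
  classical
  have hne : expSum Γ v (gen Γ v) ≠ 1 := by simp [expSum_gen]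
  exact not_isOfFinOrder_of_isMulTorsionFree hne ((expSum Γ v).isOfFinOrder h)

open scoped commutatorElement

open Classical in
theorem not_isOfFinOrder_commutatorElement_gen {u v : V} (huv : u ≠ v) (hadj : ¬Γ.Adj u v) :
    ¬IsOfFinOrder ⁅gen Γ u, gen Γ v⁆ := fun h ↦ by
  let f : RAAG Γ →* FreeGroup V :=
    lift (fun w ↦ if w = u ∨ w = v then FreeGroup.of w else 1) fun a b hab ↦ by
      have := hab.ne
      have := hab.symm
      split_ifs <;> first | simp | grind
  have hf : f ⁅gen Γ u, gen Γ v⁆ = ⁅FreeGroup.of u, FreeGroup.of v⁆ := by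
    simp [f, map_commutatorElement]
  refine not_isOfFinOrder_of_isMulTorsionFree (fun hone ↦ huv ?_) (hf ▸ f.isOfFinOrder h)
  exact eq_of_commute_of (commutatorElement_eq_one_iff_commute.1 hone)

theorem exists_freeAbelian_injective_of_commute {ι : Type*} [Finite ι] {s : ι → V}
    (hs : Function.Injective s) (hclique : Γ.IsClique (Set.range s))
    {x : RAAG Γ} (hx : ¬IsOfFinOrder x) (hcomm : ∀ i, Commute x (gen Γ (s i)))
    (hexp : ∀ i, expSum Γ (s i) x = 1) :
    ∃ φ : (Option ι → ℤ) →+ Additive (RAAG Γ), Function.Injective φ ∧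
      ∃ e ≠ 0, φ e = .ofMul x := by
  classical
  have := Fintype.ofFinite ι
  let y : Option ι → RAAG Γ := fun o ↦ o.elim x (gen Γ ∘ s)
  have hy : Pairwise fun i j ↦ Commute (y i) (y j) := by
    rintro (_ | i) (_ | j) hij
    · exact Commute.refl _
    · exact hcomm j
    · exact (hcomm i).symm
    · exact gen_commute (hclique ⟨i, rfl⟩ ⟨j, rfl⟩ (hs.ne (by simpa using hij)))
  refine ⟨powHom y hy, powHom_injective (i₀ := none) hy hx (fun o ↦ o.elim 1 (expSum Γ ∘ s)) ?_,
    Pi.single none 1, by simp, by simp [powHom_single, y]⟩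
  rintro (_ | j) hj (_ | i)
  · exact absurd rfl hj
  · exact absurd rfl hj
  · simp [y, hexp]
  · simp [y, expSum_gen, Pi.single_apply, hs.eq_iff]

end CliqueSubgroup

section CycleObstruction

open scoped commutatorElement

variable {m k : ℕ}

theorem isClique_range_fin (c : ℕ) (hm : 1 < m) (hk : ∀ i : Fin k, 2 * i.val + c + 2 < m) :
    (cycleGraph m)ᶜ.IsClique (Set.range fun i : Fin k ↦ (⟨2 * i.val + c + 2, hk i⟩ : Fin m)) := by
  rintro _ ⟨i, rfl⟩ _ ⟨j, rfl⟩ hij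
  rw [compl_adj, cycleGraph_adj_iff_val hm]
  exact ⟨hij, by grind⟩

theorem exists_freeAbelian_injective_cycleGraph (hk : 2 * k + 1 < m) :
    ∃ φ : (Option (Fin k) → ℤ) →+ Additive (GG (cycleGraph m)), Function.Injective φ := by
  have hs (i : Fin k) : 2 * i.val + 2 < m := by omega
  obtain ⟨φ, hφ, -⟩ := exists_freeAbelian_injective_of_commute (ι := Fin k)
    (s := fun i ↦ ⟨2 * i.val + 2, hs i⟩) (x := gen (cycleGraph m)ᶜ ⟨0, by omega⟩)
    (fun i j h ↦ by simpa [Fin.ext_iff] using h) (isClique_range_fin 0 (by omega) hs)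
    (not_isOfFinOrder_gen _)
    (fun i ↦ gen_compl_commute (by rw [cycleGraph_adj_iff_val (by omega)]; grind))
    (fun i ↦ by simp [expSum_gen])
  exact ⟨φ, hφ⟩

theorem exists_freeAbelian_injective_cycleGraph_commutator (hk : 2 * k + 2 < m) :
    ∃ φ : (Option (Fin k) → ℤ) →+ Additive (GG (cycleGraph m)), Function.Injective φ ∧
      ∃ e ≠ 0, (φ e).toMul ∈ commutator (GG (cycleGraph m)) := by
  have hs (i : Fin k) : 2 * i.val + 1 + 2 < m := by omega
  have hcomm (j : Fin m) (hj : j.val < 2) (i : Fin k) :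
      Commute (gen (cycleGraph m)ᶜ j) (gen (cycleGraph m)ᶜ ⟨2 * i.val + 1 + 2, hs i⟩) :=
    gen_compl_commute (by rw [cycleGraph_adj_iff_val (by omega)]; grind)
  let u : Fin m := ⟨0, by omega⟩
  let v : Fin m := ⟨1, by omega⟩
  obtain ⟨φ, hφ, e, he, heq⟩ := exists_freeAbelian_injective_of_commute (ι := Fin k)
    (s := fun i ↦ ⟨2 * i.val + 1 + 2, hs i⟩)
    (x := ⁅gen (cycleGraph m)ᶜ u, gen (cycleGraph m)ᶜ v⁆)
    (fun i j h ↦ by simpa [Fin.ext_iff] using h) (isClique_range_fin 1 (by omega) hs)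
    (not_isOfFinOrder_commutatorElement_gen (by simp [u, v])
      (by simp [compl_adj, cycleGraph_adj_iff_val (show 1 < m by omega), u, v]))
    (fun i ↦ by
      have hu := hcomm u (by simp [u]) i
      have hv := hcomm v (by simp [v]) i
      exact ((hu.mul_left hv).mul_left hu.inv_left).mul_left hv.inv_left)
    (fun i ↦ by simp [map_commutatorElement, commutatorElement_eq_one_iff_commute, Commute.all])
  exact ⟨φ, hφ, e, he, heq ▸ Subgroup.commutator_mem_commutator (by simp) (by simp)⟩

theorem le_of_injective_cycleGraph {n : ℕ} (hn : 2 < n) {ψ : GG (cycleGraph m) →* GG (cycleGraph n)}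
    (hψ : Function.Injective ψ) : m ≤ n := by
  by_contra! hmn
  obtain ⟨k, rfl | rfl⟩ := Nat.even_or_odd' n
  · obtain ⟨r, rfl⟩ : ∃ r, k = r + 1 := ⟨k - 1, by omega⟩
    obtain ⟨φ, hφ, e, he, hcomm⟩ :=
      exists_freeAbelian_injective_cycleGraph_commutator (show 2 * r + 2 < m by omega)
    refine he (eq_zero_of_mem_commutator (φ := (MonoidHom.toAdditive ψ).comp φ) (hψ.comp hφ)
      (by omega) (even_two_mul _) (by simp) ?_)
    have hmap : (commutator (GG (cycleGraph m))).map ψ ≤ commutator _ := by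
      rw [commutator_def, Subgroup.map_commutator]
      exact Subgroup.commutator_mono le_top le_top
    exact hmap (Subgroup.mem_map_of_mem ψ hcomm)
  · obtain ⟨φ, hφ⟩ := exists_freeAbelian_injective_cycleGraph (show 2 * k + 1 < m by omega)
    have hrank := two_mul_finrank_le (φ := (MonoidHom.toAdditive ψ).comp φ) (hψ.comp hφ)
      (by omega)
    have hcard : Module.finrank ℤ (Option (Fin k) → ℤ) = k + 1 := by simp
    omega

end CycleObstruction

section CoContraction

variable {V W : Type} {Γ : SimpleGraph V}

theorem exists_injective_of_iso {Δ : SimpleGraph W} (e : Γ ≃g Δ) :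
    ∃ f : RAAG Γ →* RAAG Δ, Function.Injective f := by
  let f : RAAG Γ →* RAAG Δ := lift (gen Δ ∘ e) fun _ _ h ↦ gen_commute (e.map_adj_iff.2 h)
  let g : RAAG Δ →* RAAG Γ :=
    lift (gen Γ ∘ e.symm) fun _ _ h ↦ gen_commute (e.symm.map_adj_iff.2 h)
  have hgf : g.comp f = MonoidHom.id _ := hom_ext fun v ↦ by simp [f, g]
  exact ⟨f, Function.LeftInverse.injective (g := g) (DFunLike.congr_fun hgf)⟩

/-- The contraction of the pair `{none, some c}` in a graph on `Option W`; the merged vertex is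
called `c`. -/
def contract (Λ : SimpleGraph (Option W)) (c : W) : SimpleGraph W :=
  .fromRel fun u v ↦ Λ.Adj (some u) (some v) ∨ (u = c ∧ Λ.Adj none (some v))

theorem contract_adj (Λ : SimpleGraph (Option W)) (c u v : W) :
    (contract Λ c).Adj u v ↔ Λ.Adj (some u) (some v) ∨
      (u ≠ v ∧ ((u = c ∧ Λ.Adj none (some v)) ∨ (v = c ∧ Λ.Adj none (some u)))) := by
  have hne : Λ.Adj (some u) (some v) → u ≠ v := fun h huv ↦ h.ne (congrArg some huv)
  have hsymm := Λ.adj_comm (some u) (some v)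
  rw [contract, fromRel_adj]
  tauto

open Classical in
/-- The map from the group of a contraction to the original group which sends the merged vertex
to the conjugate of one of its two preimages by the other. -/
noncomputable def coContract (Λ : SimpleGraph (Option W)) (c : W) : GG (contract Λ c) →* GG Λ :=
  lift (fun v ↦ if v = c then gen Λᶜ none * gen Λᶜ (some c) * (gen Λᶜ none)⁻¹
    else gen Λᶜ (some v)) fun u v h ↦ by
      have hne := h.ne
      have hadj : ¬(contract Λ c).Adj u v := ((compl_adj _ _ _).1 h).2
      rw [contract_adj] at hadj
      have hsome : Commute (gen Λᶜ (some u)) (gen Λᶜ (some v)) :=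
        gen_compl_commute fun h ↦ hadj (.inl h)
      split_ifs with hu hv hv
      · exact absurd (hu.trans hv.symm) hne
      · have hnone : Commute (gen Λᶜ none) (gen Λᶜ (some v)) :=
          gen_compl_commute fun h ↦ hadj (.inr ⟨hne, .inl ⟨hu, h⟩⟩)
        exact (hnone.mul_left (hu ▸ hsome)).mul_left hnone.inv_left
      · have hnone : Commute (gen Λᶜ (some u)) (gen Λᶜ none) :=
          (gen_compl_commute fun h ↦ hadj (.inr ⟨hne, .inr ⟨hv, h⟩⟩)).symm
        exact (hnone.mul_right (hv ▸ hsome)).mul_right hnone.inv_right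
      · exact hsome

/-- The holomorph of `G × G`; it contains the swap of the two factors as `inr prodComm`. -/
abbrev SquareHolomorph (G : Type*) [Group G] : Type _ :=
  (G × G) ⋊[MonoidHom.id (MulAut (G × G))] MulAut (G × G)

theorem conj_inl_prodComm {G : Type*} [Group G] (p : G × G) :
    (.inr MulEquiv.prodComm * .inl p * (.inr MulEquiv.prodComm)⁻¹ : SquareHolomorph G) =
      .inl p.swap := by
  rw [← map_inv, ← SemidirectProduct.inl_aut]
  rfl

/-- The vertices whose generators act on the second copy of `G(contract Λ c)` in `swapRep`. -/
def secondCopy (Λ : SimpleGraph (Option W)) (c : W) : Set W :=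
  {v | Λ.Adj none (some v) → v = c}

/-- The values of `swapRep` on the old vertices: `some c` lives on the second copy, the other
vertices live on the first, and those not adjacent to `none` on both. -/
noncomputable def copies (Λ : SimpleGraph (Option W)) (c v : W) :
    GG (contract Λ c) × GG (contract Λ c) :=
  (retract _ {c}ᶜ (gen _ v), retract _ (secondCopy Λ c) (gen _ v))

theorem copies_commute {Λ : SimpleGraph (Option W)} {c u v : W} (h : ¬Λ.Adj (some u) (some v)) :
    Commute (copies Λ c u) (copies Λ c v) := by
  refine Commute.prod (commute_retract_gen fun hu hv ↦ gen_compl_commute ?_)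
    (commute_retract_gen fun hu hv ↦ gen_compl_commute ?_)
  · rw [contract_adj]
    rintro (h' | ⟨-, ⟨rfl, -⟩ | ⟨rfl, -⟩⟩)
    exacts [h h', hu rfl, hv rfl]
  · rw [contract_adj]
    rintro (h' | ⟨hne, ⟨rfl, h'⟩ | ⟨rfl, h'⟩⟩)
    exacts [h h', hne (hv h').symm, hne (hu h')]

theorem swap_copies {Λ : SimpleGraph (Option W)} {c v : W} (hc : Λ.Adj none (some c))
    (h : ¬Λ.Adj none (some v)) : (copies Λ c v).swap = copies Λ c v := by
  have hvc : v ∈ ({c} : Set W)ᶜ := fun hvc ↦ h (hvc ▸ hc)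
  have hv : v ∈ secondCopy Λ c := fun h' ↦ absurd h' h
  rw [copies, retract_gen_of_mem hvc, retract_gen_of_mem hv, Prod.swap_prod_mk]

/-- The representation of `G(Λ)` on two copies of `G(contract Λ c)` in which the vertex `none`
swaps the copies. -/
noncomputable def swapRep {Λ : SimpleGraph (Option W)} {c : W} (hc : Λ.Adj none (some c)) :
    GG Λ →* SquareHolomorph (GG (contract Λ c)) :=
  have hswap (v : W) (h : ¬Λ.Adj none (some v)) :
      Commute (.inr MulEquiv.prodComm : SquareHolomorph _) (.inl (copies Λ c v)) := by
    rw [commute_iff_eq, ← mul_inv_eq_iff_eq_mul, conj_inl_prodComm, swap_copies hc h]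
  lift (fun o ↦ o.elim (.inr MulEquiv.prodComm) fun v ↦ .inl (copies Λ c v)) fun x y h ↦ by
    obtain ⟨hne, hadj⟩ := (compl_adj _ _ _).1 h
    rcases x with - | u <;> rcases y with - | v
    · exact absurd rfl hne
    · exact hswap v hadj
    · exact (hswap u (mt Adj.symm hadj)).symm
    · exact (copies_commute hadj).map SemidirectProduct.inl

theorem swapRep_comp_coContract {Λ : SimpleGraph (Option W)} {c : W}
    (hc : Λ.Adj none (some c)) :
    (swapRep hc).comp (coContract Λ c) = SemidirectProduct.inl.comp
      ((MonoidHom.id _).prod (retract _ (secondCopy Λ c \ {c}))) := by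
  refine hom_ext fun v ↦ ?_
  have hnone : swapRep hc (gen Λᶜ none) = .inr MulEquiv.prodComm := by
    rw [swapRep, lift_gen, Option.elim_none]
  have hsome (v : W) : swapRep hc (gen Λᶜ (some v)) = .inl (copies Λ c v) := by
    rw [swapRep, lift_gen, Option.elim_some]
  rcases eq_or_ne v c with rfl | hv
  · have hmem : v ∈ secondCopy Λ v := fun _ ↦ rfl
    simp [coContract, hnone, hsome, conj_inl_prodComm, copies, retract_gen_of_mem hmem,
      retract_gen_of_notMem]
  · have hmem : retract _ (secondCopy Λ c \ {c}) (gen (contract Λ c)ᶜ v) =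
        retract _ (secondCopy Λ c) (gen _ v) := by
      rw [Set.sdiff_eq, ← retract_retract, retract_gen_of_mem (Set.mem_compl_singleton_iff.2 hv)]
    simp [coContract, hsome, hv, copies, retract_gen_of_mem, hmem]

theorem coContract_injective {Λ : SimpleGraph (Option W)} {c : W} (hc : Λ.Adj none (some c)) :
    Function.Injective (coContract Λ c) := by
  have hinj : Function.Injective ((swapRep hc).comp (coContract Λ c)) := by
    rw [swapRep_comp_coContract]
    exact SemidirectProduct.inl_injective.comp fun x y h ↦ congrArg Prod.fst h
  exact Function.Injective.of_comp (f := swapRep hc) hinj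

/-- The cycle on `n + 1` vertices, its last vertex being called `none`. -/
def pointedCycle (n : ℕ) : SimpleGraph (Option (Fin n)) :=
  (cycleGraph (n + 1)).comap finSuccEquivLast.symm

theorem contract_pointedCycle {n : ℕ} (hn : 2 < n) :
    contract (pointedCycle n) ⟨n - 1, by omega⟩ = cycleGraph n := by
  ext u v
  simp only [contract_adj, ne_eq, pointedCycle, comap_adj, finSuccEquivLast_symm_some,
    finSuccEquivLast_symm_none, cycleGraph_adj_iff_val (show 1 < n + 1 by omega),
    cycleGraph_adj_iff_val (show 1 < n by omega), Fin.ext_iff, Fin.val_castSucc, Fin.val_last,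
    and_true]
  omega

theorem exists_injective_cycleGraph_succ {n : ℕ} (hn : 2 < n) :
    ∃ f : GG (cycleGraph n) →* GG (cycleGraph (n + 1)), Function.Injective f := by
  have hadj : (pointedCycle n).Adj none (some ⟨n - 1, by omega⟩) := by
    simp only [pointedCycle, comap_adj, finSuccEquivLast_symm_some, finSuccEquivLast_symm_none,
      cycleGraph_adj_iff_val (show 1 < n + 1 by omega), Fin.val_castSucc, Fin.val_last]
    omega
  let e : (pointedCycle n)ᶜ ≃g (cycleGraph (n + 1))ᶜ :=
    ⟨finSuccEquivLast.symm, by simp [pointedCycle, compl_adj]⟩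
  obtain ⟨f, hf⟩ := exists_injective_of_iso e
  have hψ := coContract_injective hadj
  rw [← contract_pointedCycle hn]
  exact ⟨f.comp (coContract _ _), hf.comp hψ⟩

theorem exists_injective_cycleGraph_of_le {m n : ℕ} (hm : 2 < m) (hmn : m ≤ n) :
    ∃ f : GG (cycleGraph m) →* GG (cycleGraph n), Function.Injective f := by
  induction n, hmn using Nat.le_induction with
  | base => exact ⟨MonoidHom.id _, Function.injective_id⟩
  | succ n hmn ih =>
    obtain ⟨f, hf⟩ := ih
    obtain ⟨g, hg⟩ := exists_injective_cycleGraph_succ (hm.trans_le hmn)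
    exact ⟨g.comp f, hg.comp hf⟩

end CoContraction

end RAAG

/-- `G(C_m) ↪ G(C_n)` iff `m ≤ n`, for `m, n ≥ 3`. -/
theorem statement4 (m n : ℕ) (hm : 3 ≤ m) (hn : 3 ≤ n) :
    (∃ φ : GG (cycleGraph m) →* GG (cycleGraph n), Function.Injective φ) ↔ m ≤ n :=
  ⟨fun ⟨_, hφ⟩ ↦ RAAG.le_of_injective_cycleGraph hn hφ, RAAG.exists_injective_cycleGraph_of_le hm⟩
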